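/- For every causal model M, every (u, v) ∈ R(U ∪ V) with P_M(u, v) > 0, and all Y, X ⊆ V, y ∈ R(Y), x ∈ R(X): the B-probability of the basic counterfactual equals the probability of the basic counterfactual computed in the PO-SCM, conditional on the exogenous and endogenous variables of M: P^B(y_x | u, v) = P^N(y_x | u, v) (where the conditioning on the right is on U = u and V = v only, not on the potential outcome variables). -/

import Mathlib

/-!
Conditioning an interventional distribution on the exogenous variables is the same as also
intervening on them: `P_{do(X = x)}(· | U = u) = P_{do(X = x, U = u)}`. Applied to the PO-SCM at a
world `(u, v, b)`, where `b` collects the potential outcomes, this fixes `b`, so that each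
endogenous variable `i` becomes a function `f i` of its parents.

Averaging over `b` given `(u, v)`, the functions `f i` are independent, and each has independent
values at the different values of the parents. The actual world pins `f i` at the actual values of
the parents of `i`. At these the outcome is therefore the actual value of `i`, while at any other
values it still follows the original conditional probability: this is exactly the table of the
actualized refinement.
-/

open Finset

noncomputable section

attribute [local instance] Classical.propDecidable

/-- An assignment of values to the variables. -/
abbrev Asg {ν : Type} (Val : ν → Type) : Type := (i : ν) → Val i

/-- A probabilistic causal model (a causal Bayesian network with explicit exogenous
variables): a signature (variables `ν` with value sets `Val`), a graph given by the
parent map `pa` (with `ord` a witness of acyclicity, and the variables in `exo` being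
the roots), and a joint probability distribution that is Markov relative to the graph,
presented by the conditional probability table `cpt i w x = P(i = x | pa i = w|_{pa i})`
of each variable given its parents (for exogenous variables this is the marginal). -/
structure CM (ν : Type) (Val : ν → Type) : Type where
  exo : Finset ν
  pa : ν → Finset ν
  ord : ν → ℕ
  cpt : (i : ν) → Asg Val → Val i → ℝ

/-- A basic counterfactual event `(Y = yv)_{X ← xv}`. -/
structure CFEvent (ν : Type) (Val : ν → Type) : Type where
  X : Finset ν
  xv : Asg Val
  Y : Finset ν
  yv : Asg Val

namespace CM

variable {ν : Type} {Val : ν → Type}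

/-- Well-formedness of a causal model: exogenous variables are roots, the graph is
acyclic, the conditional probability table of each variable depends only on its
parents, and each table is a probability distribution. -/
structure WF [Fintype ν] [∀ i, Fintype (Val i)] (M : CM ν Val) : Prop where
  pa_exo : ∀ i ∈ M.exo, M.pa i = ∅
  acyclic : ∀ i j, j ∈ M.pa i → M.ord j < M.ord i
  cpt_pa : ∀ (i : ν) (w w' : Asg Val) (x : Val i),
    (∀ j ∈ M.pa i, w j = w' j) → M.cpt i w x = M.cpt i w' x
  cpt_nonneg : ∀ i w x, 0 ≤ M.cpt i w x
  cpt_sum : ∀ i w, ∑ x, M.cpt i w x = 1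

variable [Fintype ν] [∀ i, Fintype (Val i)] [∀ i, Nonempty (Val i)]

variable (M : CM ν Val)

/-- The joint distribution `P(U = u, V = v)` (Markov factorization). -/
def joint (w : Asg Val) : ℝ := ∏ i, M.cpt i w (w i)

/-- The interventional distribution `P_{do(X = xv)}` (truncated factorization). -/
def pdo (X : Finset ν) (xv w : Asg Val) : ℝ :=
  if ∀ i ∈ X, w i = xv i then ∏ i ∈ Xᶜ, M.cpt i w (w i) else 0

/-- `P_{do(X = xv)}(Y = yv | U = u)`, where `u` is the exogenous part of `w`:
the probability of the basic counterfactual `(Y = yv)_{X ← xv}` given the world `w`. -/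
def cfBasic (X : Finset ν) (xv : Asg Val) (Y : Finset ν) (yv : Asg Val) (w : Asg Val) : ℝ :=
  (∑ w' : Asg Val,
      if (∀ i ∈ M.exo, w' i = w i) ∧ ∀ i ∈ Y, w' i = yv i then M.pdo X xv w' else 0) /
  (∑ w' : Asg Val, if ∀ i ∈ M.exo, w' i = w i then M.pdo X xv w' else 0)

/-- The probability of a complex counterfactual
`P(y_x, …, z_w) = Σ_{(u,v)} P(y_x | u,v) ⋯ P(z_w | u,v) P(u,v)`. -/
def cfProb (evs : List (CFEvent ν Val)) : ℝ :=
  ∑ w : Asg Val, (evs.map fun e => M.cfBasic e.X e.xv e.Y e.yv w).prod * M.joint w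

/-- Conditional probability of a complex counterfactual given an actual event `Z = zv`:
`P(y_x, …, z_w | Z = zv) = P(y_x, …, z_w, Z = zv) / P(Z = zv)`. -/
def cfProbCond (evs : List (CFEvent ν Val)) (Z : Finset ν) (zv : Asg Val) : ℝ :=
  (∑ w : Asg Val,
      (if ∀ i ∈ Z, w i = zv i then (evs.map fun e => M.cfBasic e.X e.xv e.Y e.yv w).prod
       else 0) * M.joint w) /
  (∑ w : Asg Val, if ∀ i ∈ Z, w i = zv i then M.joint w else 0)

/-- `M` is a structural causal model: every endogenous variable is a deterministic
function of its parents (the exogenous variables are automatically mutually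
independent in this presentation). -/
def IsSCM : Prop :=
  ∀ i ∉ M.exo, ∀ (w : Asg Val) (x : Val i), M.cpt i w x = 0 ∨ M.cpt i w x = 1

/-- The actualized refinement `M^{(u,v)}` of `M` at the actual world `a`:
for each endogenous variable, the conditional distribution given the *actual* values of
its parents is replaced by the point mass at the actual value of the variable. -/
def refine (a : Asg Val) : CM ν Val where
  exo := M.exo
  pa := M.pa
  ord := M.ord
  cpt := fun i w x =>
    if i ∉ M.exo ∧ ∀ j ∈ M.pa i, w j = a j then (if x = a i then 1 else 0)
    else M.cpt i w x

/-- The B-semantics probability of a basic counterfactual,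
`P^B((Y = yv)_{X ← xv} | a) = (P^{a})_{do(X = xv)}(Y = yv | U = u)` where `u` is the
exogenous part of the actual world `a`. -/
def pbBasic (a : Asg Val) (X : Finset ν) (xv : Asg Val) (Y : Finset ν) (yv : Asg Val) : ℝ :=
  (M.refine a).cfBasic X xv Y yv a

/-- The B-semantics probability of a complex counterfactual. -/
def pbProb (evs : List (CFEvent ν Val)) : ℝ :=
  ∑ w : Asg Val, (evs.map fun e => M.pbBasic w e.X e.xv e.Y e.yv).prod * M.joint w

/-- The conditional B-semantics probability of a complex counterfactual given `Z = zv`. -/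
def pbProbCond (evs : List (CFEvent ν Val)) (Z : Finset ν) (zv : Asg Val) : ℝ :=
  (∑ w : Asg Val,
      (if ∀ i ∈ Z, w i = zv i then (evs.map fun e => M.pbBasic w e.X e.xv e.Y e.yv).prod
       else 0) * M.joint w) /
  (∑ w : Asg Val, if ∀ i ∈ Z, w i = zv i then M.joint w else 0)

/-- An assignment of values to the parents of `i`. -/
def PaAsg (i : ν) : Type := (j : {j : ν // j ∈ M.pa i}) → Val j.1

instance (i : ν) : Fintype (M.PaAsg i) := by unfold PaAsg; infer_instance
instance (i : ν) : Nonempty (M.PaAsg i) := ⟨fun j => Classical.arbitrary (Val j.1)⟩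

/-- Extend an assignment of the parents of `i` to a full assignment (arbitrarily). -/
def extendPa (i : ν) (κ : M.PaAsg i) : Asg Val :=
  fun j => if h : j ∈ M.pa i then κ ⟨j, h⟩ else Classical.arbitrary (Val j)

/-- The index type of the potential outcome variables `X_{pa_X}` of the PO-SCM:
one for each endogenous variable `X` and each value `pa_X` of its parents. -/
def POI : Type := Σ i : {i : ν // i ∉ M.exo}, M.PaAsg i.1

instance : Fintype (POI M) := by unfold POI; infer_instance

/-- The value set of the potential outcome variable `X_{pa_X}` is that of `X`. -/
def POB : POI M → Type := fun p => Val p.1.1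

instance (p : POI M) : Fintype (POB M p) := by unfold POB; infer_instance
instance (p : POI M) : Nonempty (POB M p) := by unfold POB; infer_instance

/-- The type of values of the response variable `U_X` of the canonical frame:
functions from values of the parents of `X` to values of `X`. -/
def RType (i : ν) : Type := M.PaAsg i → Val i

instance (i : ν) : Fintype (M.RType i) := by unfold RType; infer_instance
instance (i : ν) : Nonempty (M.RType i) := ⟨fun _ => Classical.arbitrary (Val i)⟩

/-- The index type of the response variables of the canonical frame:
one for each endogenous variable. -/
def RVI : Type := {i : ν // i ∉ M.exo}

instance : Fintype (RVI M) := by unfold RVI; infer_instance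

/-- The value set of the response variable `U_X`. -/
def RB : RVI M → Type := fun p => M.RType p.1

instance (p : RVI M) : Fintype (RB M p) := by unfold RB; infer_instance
instance (p : RVI M) : Nonempty (RB M p) := by unfold RB; infer_instance

end CM

/-- The family of value sets of an extended signature `ν ⊕ β`. -/
def SumVal {ν β : Type} (Val : ν → Type) (B : β → Type) : ν ⊕ β → Type := fun i =>
  match i with
  | .inl j => Val j
  | .inr b => B b

section SumValInst

variable {ν β : Type} {Val : ν → Type} {B : β → Type}

instance [∀ i, Fintype (Val i)] [∀ b, Fintype (B b)] (i : ν ⊕ β) :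
    Fintype (SumVal Val B i) := by
  cases i with
  | inl j => exact inferInstanceAs (Fintype (Val j))
  | inr b => exact inferInstanceAs (Fintype (B b))

instance [∀ i, Nonempty (Val i)] [∀ b, Nonempty (B b)] (i : ν ⊕ β) :
    Nonempty (SumVal Val B i) := by
  cases i with
  | inl j => exact inferInstanceAs (Nonempty (Val j))
  | inr b => exact inferInstanceAs (Nonempty (B b))

/-- Lift an assignment on `ν` to one on `ν ⊕ β` (arbitrary on the new variables). -/
def liftAsg [∀ b, Nonempty (B b)] (xv : Asg Val) : Asg (SumVal Val B) := fun i =>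
  match i with
  | .inl j => xv j
  | .inr b => Classical.arbitrary (B b)

/-- Lift a counterfactual event on the original variables to the extended signature. -/
def liftCFEvent [∀ b, Nonempty (B b)] (e : CFEvent ν Val) : CFEvent (ν ⊕ β) (SumVal Val B) :=
  ⟨e.X.image Sum.inl, liftAsg e.xv, e.Y.image Sum.inl, liftAsg e.yv⟩

variable [Fintype ν] [Fintype β] [∀ i, Fintype (Val i)] [∀ b, Fintype (B b)]
  [∀ i, Nonempty (Val i)] [∀ b, Nonempty (B b)]

/-- The probability, computed in a model `N` over an extended signature, of a complex
counterfactual over the original variables. -/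
def extProb (N : CM (ν ⊕ β) (SumVal Val B)) (evs : List (CFEvent ν Val)) : ℝ :=
  N.cfProb (evs.map liftCFEvent)

/-- The probability, computed in a model `N` over an extended signature, of a complex
counterfactual over the original variables, conditional on an actual event `Z = zv`
over the original variables. -/
def extProbCond (N : CM (ν ⊕ β) (SumVal Val B)) (evs : List (CFEvent ν Val))
    (Z : Finset ν) (zv : Asg Val) : ℝ :=
  N.cfProbCond (evs.map liftCFEvent) (Z.image Sum.inl) (liftAsg zv)

/-- The probability, computed in a model `N` over an extended signature, of a basic
counterfactual conditional on the values `a` of *all* the original variables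
(marginalizing over the added exogenous variables), via the law of total probability. -/
def extBasicCond (N : CM (ν ⊕ β) (SumVal Val B)) (a : Asg Val)
    (X : Finset ν) (xv : Asg Val) (Y : Finset ν) (yv : Asg Val) : ℝ :=
  (∑ w : Asg (SumVal Val B),
      if ∀ i : ν, w (Sum.inl i) = a i then
        N.cfBasic (X.image Sum.inl) (liftAsg xv) (Y.image Sum.inl) (liftAsg yv) w * N.joint w
      else 0) /
  (∑ w : Asg (SumVal Val B), if ∀ i : ν, w (Sum.inl i) = a i then N.joint w else 0)

end SumValInst

namespace CM

variable {ν : Type} {Val : ν → Type} [Fintype ν] [∀ i, Fintype (Val i)] [∀ i, Nonempty (Val i)]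
variable (M : CM ν Val)

/-- The PO-SCM `M^N` of `M`: the structural causal model obtained from `M` by adding,
for each endogenous variable `X` and each value `pa_X` of its parents, an exogenous
potential outcome variable `X_{pa_X}` (with marginal `P_M(X | Pa_X = pa_X)`, all
exogenous variables mutually independent), and the structural equation
`X = X_{pa_X}` whenever `Pa_X = pa_X`. -/
def MN : CM (ν ⊕ POI M) (SumVal Val (POB M)) where
  exo := (M.exo.image Sum.inl) ∪ (univ.image Sum.inr)
  pa := fun i =>
    match i with
    | .inl j => ((M.pa j).image Sum.inl) ∪
        ((univ.filter fun p : POI M => p.1.1 = j).image Sum.inr)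
    | .inr _ => ∅
  ord := fun i =>
    match i with
    | .inl j => M.ord j + 1
    | .inr _ => 0
  cpt := fun i =>
    match i with
    | .inl j => fun w x =>
        if h : j ∈ M.exo then M.cpt j (fun k => w (Sum.inl k)) x
        else if x = w (Sum.inr ⟨⟨j, h⟩, fun k => w (Sum.inl k.1)⟩) then 1 else 0
    | .inr p => fun _ x => M.cpt p.1.1 (M.extendPa p.1.1 p.2) x

/-- `P^N(y_x, …, z_w)`: the probability of a complex counterfactual computed in the
PO-SCM `M^N`. -/
def pnProb (evs : List (CFEvent ν Val)) : ℝ := extProb M.MN evs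

/-- `P^N(y_x, …, z_w | Z = zv)`: the conditional probability of a complex
counterfactual computed in the PO-SCM `M^N`, given an actual event on the
endogenous variables. -/
def pnProbCond (evs : List (CFEvent ν Val)) (Z : Finset ν) (zv : Asg Val) : ℝ :=
  extProbCond M.MN evs Z zv

/-- `P^N((Y = yv)_{X ← xv} | U = u, V = v)`: the probability of a basic counterfactual
computed in the PO-SCM `M^N`, conditional on the exogenous and endogenous variables of
`M` only (marginalizing over the potential outcome variables). -/
def pnBasicCond (a : Asg Val) (X : Finset ν) (xv : Asg Val) (Y : Finset ν) (yv : Asg Val) : ℝ :=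
  extBasicCond M.MN a X xv Y yv

/-- A canonical SCM for `M`, determined by a distribution `q` of the response variables:
the SCM over the canonical frame, which adds for each endogenous variable `X` an
exogenous response variable `U_X` ranging over the functions `f_X : R(Pa_X) → R(X)`,
with the structural equation `X = f_X(Pa_X)` where `f_X` is the value of `U_X`. -/
def canonSCM (q : (p : RVI M) → RType M p.1 → ℝ) : CM (ν ⊕ RVI M) (SumVal Val (RB M)) where
  exo := (M.exo.image Sum.inl) ∪ (univ.image Sum.inr)
  pa := fun i =>
    match i with
    | .inl j => ((M.pa j).image Sum.inl) ∪
        ((univ.filter fun p : RVI M => p.1 = j).image Sum.inr)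
    | .inr _ => ∅
  ord := fun i =>
    match i with
    | .inl j => M.ord j + 1
    | .inr _ => 0
  cpt := fun i =>
    match i with
    | .inl j => fun w x =>
        if h : j ∈ M.exo then M.cpt j (fun k => w (Sum.inl k)) x
        else if x = w (Sum.inr ⟨j, h⟩) (fun k => w (Sum.inl k.1)) then 1 else 0
    | .inr p => fun _ x => q p x

/-- `q` is the distribution of the response variables of a canonical SCM for `M`:
it is a probability distribution (the response variables being mutually independent and
independent of the exogenous variables of `M`, whose distribution is kept), and it
reproduces the conditional probability tables of `M`:
`P_M(X = x | Pa_X = pa_X) = Σ_{f_X with f_X(pa_X) = x} P(U_X = f_X)`. -/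
def IsCanonicalDist (q : (p : RVI M) → RType M p.1 → ℝ) : Prop :=
  (∀ p x, 0 ≤ q p x) ∧ (∀ p, ∑ f, q p f = 1) ∧
  ∀ (p : RVI M) (κ : M.PaAsg p.1) (x : Val p.1),
    M.cpt p.1 (M.extendPa p.1 κ) x = ∑ f ∈ univ.filter (fun f : RType M p.1 => f κ = x), q p f

/-- The distribution of the response variables of the GH-SCM:
`P(U_X = f_X) = ∏_{pa_X} P_M(X = f_X(pa_X) | Pa_X = pa_X)`. -/
def qGH : (p : RVI M) → RType M p.1 → ℝ := fun p f =>
  ∏ κ : M.PaAsg p.1, M.cpt p.1 (M.extendPa p.1 κ) (f κ)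

end CM

/-- A default assignment. -/
def dfltAsg {ν : Type} (Val : ν → Type) [∀ i, Nonempty (Val i)] : Asg Val :=
  fun i => Classical.arbitrary (Val i)

lemma sum_ite_forall_mem_eq_prod {K R : Type*} [Fintype K] {V : K → Type*} [∀ k, Fintype (V k)]
    [CommSemiring R] (q : ∀ k, V k → R) (S : Finset K) (hq : ∀ k ∉ S, ∑ x, q k x = 1)
    (g : ∀ k, V k) :
    ∑ f : ∀ k, V k, (if ∀ k ∈ S, f k = g k then ∏ k, q k (f k) else 0) = ∏ k ∈ S, q k (g k) := by
  have hcylinder : univ.filter (fun f : ∀ k, V k => ∀ k ∈ S, f k = g k) =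
      Fintype.piFinset fun k => if k ∈ S then {g k} else univ := by
    ext f
    simp only [mem_filter_univ, Fintype.mem_piFinset]
    refine forall_congr' fun k => ?_
    by_cases hk : k ∈ S <;> simp [hk]
  rw [← sum_filter, hcylinder, ← prod_univ_sum, ← prod_subset S.subset_univ]
  · exact prod_congr rfl fun k hk => by simp [hk]
  · intro k _ hk
    simp [hk, hq k hk]

lemma prod_compl_eq_prod_subtype {ι R : Type*} [Fintype ι] [CommMonoid R] {S T : Finset ι}
    (hST : S ⊆ T) (f : ι → R) :
    ∏ i ∈ Tᶜ, f i = ∏ i : {i // i ∉ S}, if i.1 ∈ T then 1 else f i.1 := by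
  rw [← prod_subtype Sᶜ (fun _ => mem_compl) fun i => if i ∈ T then 1 else f i,
    ← prod_subset (compl_subset_compl.2 hST)]
  · exact prod_congr rfl fun i hi => (if_neg (mem_compl.1 hi)).symm
  · intro i _ hi
    exact if_pos (notMem_compl.1 hi)

namespace CM

section Interventions

variable {ν : Type} {Val : ν → Type} [Fintype ν] {M : CM ν Val}

/-- The decidable equality is arbitrary, since the one used by `pdo` at a sum type differs from the
one found directly. -/
lemma pdo_of_forall_eq [DecidableEq ν] {F : Finset ν} {c w : Asg Val} (h : ∀ i ∈ F, w i = c i) :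
    M.pdo F c w = ∏ i ∈ Fᶜ, M.cpt i w (w i) := by
  rw [pdo, if_pos h]
  congr!

lemma pdo_of_not_forall_eq {F : Finset ν} {c w : Asg Val} (h : ¬∀ i ∈ F, w i = c i) :
    M.pdo F c w = 0 :=
  if_neg h

lemma pdo_univ (c w : Asg Val) : M.pdo univ c w = if w = c then 1 else 0 := by
  simp [pdo, funext_iff]

variable [∀ i, Fintype (Val i)]

lemma WF.pdo_eq_sum_pdo_insert (hM : M.WF) {F : Finset ν} {i : ν} (hi : i ∉ F)
    (hpa : M.pa i ⊆ F) (c w : Asg Val) :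
    M.pdo F c w = ∑ x, M.cpt i c x * M.pdo (insert i F) (Function.update c i x) w := by
  have hagree (x : Val i) : (∀ j ∈ insert i F, w j = Function.update c i x j) ↔
      w i = x ∧ ∀ j ∈ F, w j = c j := by
    rw [forall_mem_insert, Function.update_self]
    refine and_congr_right' (forall₂_congr fun j hj => ?_)
    rw [Function.update_of_ne (ne_of_mem_of_not_mem hj hi)]
  simp only [pdo, hagree]
  rw [Fintype.sum_eq_single (w i) fun x hx => by simp [hx.symm]]
  by_cases hw : ∀ j ∈ F, w j = c j
  · rw [if_pos hw, if_pos ⟨rfl, hw⟩, compl_insert, ← mul_prod_erase _ _ (mem_compl.2 hi),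
      hM.cpt_pa i w c (w i) fun j hj => hw j (hpa hj)]
  · rw [if_neg hw, if_neg fun h => hw h.2, mul_zero]

lemma WF.exists_notMem_pa_subset (hM : M.WF) {F : Finset ν} (hF : F ≠ univ) :
    ∃ i ∉ F, M.pa i ⊆ F := by
  obtain ⟨i, hi, hmin⟩ := exists_min_image Fᶜ M.ord
    (nonempty_iff_ne_empty.2 fun h => hF ((compl_eq_empty_iff F).1 h))
  refine ⟨i, mem_compl.1 hi, fun j hj => ?_⟩
  by_contra hjF
  exact (hM.acyclic i j hj).not_ge (hmin j (mem_compl.2 hjF))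

lemma WF.sum_pdo_eq_one (hM : M.WF) (F : Finset ν) (c : Asg Val) : ∑ w, M.pdo F c w = 1 := by
  induction hn : #Fᶜ generalizing F c with
  | zero =>
    obtain rfl : F = univ := (compl_eq_empty_iff F).1 (card_eq_zero.1 hn)
    simp [pdo_univ]
  | succ n ih =>
    have hF : F ≠ univ := by
      rintro rfl
      simp at hn
    obtain ⟨i, hi, hpa⟩ := hM.exists_notMem_pa_subset hF
    have hcard : #(insert i F)ᶜ = n := by
      rw [compl_insert, card_erase_of_mem (mem_compl.2 hi), hn, Nat.add_sub_cancel]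
    calc ∑ w, M.pdo F c w
        = ∑ x, M.cpt i c x * ∑ w, M.pdo (insert i F) (Function.update c i x) w := by
          simp only [hM.pdo_eq_sum_pdo_insert hi hpa, mul_sum]
          exact sum_comm
      _ = 1 := by simp only [ih _ _ hcard, mul_one, hM.cpt_sum]

lemma WF.cpt_congr_exo (hM : M.WF) {i : ν} (hi : i ∈ M.exo) (w w' : Asg Val) :
    M.cpt i w = M.cpt i w' :=
  funext fun x => hM.cpt_pa i w w' x fun j hj => by simp [hM.pa_exo i hi] at hj

lemma WF.ite_pdo_eq_mul_pdo (hM : M.WF) {X F : Finset ν} (hF : ∀ i, i ∈ F ↔ i ∈ M.exo ∨ i ∈ X)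
    {xv a c : Asg Val} (hcU : ∀ i ∈ M.exo, c i = a i) (hcX : ∀ i ∈ X, c i = xv i) (w : Asg Val) :
    (if ∀ i ∈ M.exo, w i = a i then M.pdo X xv w else 0) =
      (∏ i ∈ M.exo \ X, M.cpt i a (a i)) * M.pdo F c w := by
  have hagree : (∀ i ∈ F, w i = c i) ↔
      (∀ i ∈ M.exo, w i = a i) ∧ ∀ i ∈ X, w i = xv i := by
    simp only [hF, or_imp, forall_and]
    exact and_congr (forall₂_congr fun i hi => by rw [hcU i hi])
      (forall₂_congr fun i hi => by rw [hcX i hi])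
  simp only [pdo, hagree, ← ite_and, mul_ite, mul_zero]
  refine if_ctx_congr Iff.rfl (fun hw => ?_) fun _ => rfl
  have hFX : Fᶜ ⊆ Xᶜ := compl_subset_compl.2 fun i hi => (hF i).2 (Or.inr hi)
  have hsdiff : Xᶜ \ Fᶜ = M.exo \ X := by
    ext i
    simp only [mem_sdiff, mem_compl, hF]
    tauto
  rw [← prod_sdiff hFX, hsdiff]
  congr 1
  refine prod_congr rfl fun i hi => ?_
  have hiU : i ∈ M.exo := (mem_sdiff.1 hi).1
  rw [hw.1 i hiU, hM.cpt_congr_exo hiU w a]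

lemma WF.cfBasic_eq_sum_pdo (hM : M.WF) {X F : Finset ν} (hF : ∀ i, i ∈ F ↔ i ∈ M.exo ∨ i ∈ X)
    {xv a c : Asg Val} (hcU : ∀ i ∈ M.exo, c i = a i) (hcX : ∀ i ∈ X, c i = xv i)
    (ha : ∀ i ∈ M.exo, M.cpt i a (a i) ≠ 0) (Y : Finset ν) (yv : Asg Val) :
    M.cfBasic X xv Y yv a = ∑ w, if ∀ i ∈ Y, w i = yv i then M.pdo F c w else 0 := by
  have hprod : ∏ i ∈ M.exo \ X, M.cpt i a (a i) ≠ 0 :=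
    prod_ne_zero_iff.2 fun i hi => ha i (mem_sdiff.1 hi).1
  simp only [cfBasic, and_comm (a := ∀ i ∈ M.exo, _), ite_and, hM.ite_pdo_eq_mul_pdo hF hcU hcX]
  simp only [← mul_ite_zero, ← mul_sum, hM.sum_pdo_eq_one, mul_one]
  exact mul_div_cancel_left₀ _ hprod

end Interventions

section Refine

variable {ν : Type} {Val : ν → Type} [Fintype ν] {M : CM ν Val}

lemma refine_cpt_of_mem_exo {i : ν} (hi : i ∈ M.exo) (a w : Asg Val) (x : Val i) :
    (M.refine a).cpt i w x = M.cpt i w x :=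
  if_neg fun h => h.1 hi

lemma WF.refine [∀ i, Fintype (Val i)] (hM : M.WF) (a : Asg Val) :
    (M.refine a).WF where
  pa_exo := hM.pa_exo
  acyclic := hM.acyclic
  cpt_pa i w w' x h := by
    have hiff : (∀ j ∈ M.pa i, w j = a j) ↔ ∀ j ∈ M.pa i, w' j = a j :=
      forall₂_congr fun j hj => by rw [h j hj]
    simp only [CM.refine, hiff, hM.cpt_pa i w w' x h]
  cpt_nonneg i w x := by
    simp only [CM.refine]
    split_ifs
    exacts [zero_le_one, le_rfl, hM.cpt_nonneg i w x]
  cpt_sum i w := by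
    simp only [CM.refine]
    split_ifs
    exacts [Fintype.sum_ite_eq' _ _, hM.cpt_sum i w]

end Refine

section ResponseFunctions

variable {ν : Type} {Val : ν → Type} (M : CM ν Val)

/-- The values that a world `w` gives to the parents of `i`. -/
def restrictPa (i : ν) (w : Asg Val) : M.PaAsg i := fun j => w j.1

variable {M}

lemma restrictPa_eq_iff {i : ν} {w w' : Asg Val} :
    M.restrictPa i w = M.restrictPa i w' ↔ ∀ j ∈ M.pa i, w j = w' j :=
  funext_iff.trans Subtype.forall

variable [Fintype ν] [∀ i, Fintype (Val i)]

lemma sum_prod_response {R : Type*} [CommSemiring R] (G : (i : RVI M) → M.RType i.1 → R) :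
    ∑ b : Asg (POB M), ∏ i : RVI M, G i (fun κ => b ⟨i, κ⟩) = ∏ i, ∑ f, G i f := by
  let curry : Asg (POB M) ≃ Asg (RB M) :=
    Equiv.piCurry fun (i : {i // i ∉ M.exo}) (_ : M.PaAsg i.1) => Val i.1
  rw [Finset.prod_univ_sum, Fintype.piFinset_univ]
  exact curry.sum_comp fun r : Asg (RB M) => ∏ i, G i (r i)

variable [∀ i, Nonempty (Val i)]

lemma WF.cpt_extendPa_restrictPa (hM : M.WF) (i : ν) (w : Asg Val) (x : Val i) :
    M.cpt i (M.extendPa i (M.restrictPa i w)) x = M.cpt i w x :=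
  hM.cpt_pa i _ _ x fun j hj => by simp [extendPa, restrictPa, hj]

lemma WF.sum_qGH_ite_eq (hM : M.WF) (i : RVI M) (w : Asg Val) (x : Val i.1) :
    ∑ f : M.RType i.1, (if f (M.restrictPa i.1 w) = x then M.qGH i f else 0) =
      M.cpt i.1 w x := by
  have h := sum_ite_forall_mem_eq_prod (fun κ => M.cpt i.1 (M.extendPa i.1 κ))
    {M.restrictPa i.1 w} (fun κ _ => hM.cpt_sum _ _) fun _ => x
  simp only [mem_singleton, forall_eq, prod_singleton, hM.cpt_extendPa_restrictPa] at h
  exact h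

lemma WF.sum_qGH_ite_and_eq (hM : M.WF) (i : RVI M) (w w' : Asg Val)
    (hne : M.restrictPa i.1 w ≠ M.restrictPa i.1 w') (x x' : Val i.1) :
    ∑ f : M.RType i.1, (if f (M.restrictPa i.1 w) = x ∧ f (M.restrictPa i.1 w') = x' then
      M.qGH i f else 0) = M.cpt i.1 w x * M.cpt i.1 w' x' := by
  have h := sum_ite_forall_mem_eq_prod (fun κ => M.cpt i.1 (M.extendPa i.1 κ))
    {M.restrictPa i.1 w, M.restrictPa i.1 w'} (fun κ _ => hM.cpt_sum _ _)
    (Function.update (fun _ => x') (M.restrictPa i.1 w) x)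
  simp only [forall_mem_insert, mem_singleton, forall_eq, prod_pair hne, Function.update_self,
    Function.update_of_ne hne.symm, hM.cpt_extendPa_restrictPa] at h
  exact h

lemma WF.sum_qGH_ite_actual (hM : M.WF) (i : RVI M) (a w : Asg Val) (x : Val i.1) :
    ∑ f : M.RType i.1, (if f (M.restrictPa i.1 a) = a i.1 ∧ f (M.restrictPa i.1 w) = x then
      M.qGH i f else 0) = M.cpt i.1 a (a i.1) * (M.refine a).cpt i.1 w x := by
  by_cases hpa : M.restrictPa i.1 w = M.restrictPa i.1 a
  · have hcpt : (M.refine a).cpt i.1 w x = if x = a i.1 then 1 else 0 :=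
      if_pos ⟨i.2, restrictPa_eq_iff.1 hpa⟩
    rw [hcpt, hpa]
    split_ifs with hx
    · simp only [hx, and_self, hM.sum_qGH_ite_eq, mul_one]
    · rw [mul_zero]
      exact sum_eq_zero fun f _ => if_neg fun h => hx (h.2.symm.trans h.1)
  · have hcpt : (M.refine a).cpt i.1 w x = M.cpt i.1 w x :=
      if_neg fun h => hpa (restrictPa_eq_iff.2 h.2)
    rw [hcpt, hM.sum_qGH_ite_and_eq i a w (Ne.symm hpa)]

end ResponseFunctions

end CM

section JoinAsg

variable {ν β : Type} {Val : ν → Type} {B : β → Type}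

/-- The world of an extended signature `ν ⊕ β` with values `v` on the original variables and `b`
on the added ones. -/
def joinAsg (v : Asg Val) (b : Asg B) : Asg (SumVal Val B)
  | .inl i => v i
  | .inr p => b p

lemma forall_inl_joinAsg_iff {v v' : Asg Val} {b : Asg B} :
    (∀ i, joinAsg v b (Sum.inl i) = v' i) ↔ v = v' :=
  funext_iff.symm

lemma forall_image_inl_iff [∀ p, Nonempty (B p)] {S : Finset ν} {v c : Asg Val} {b : Asg B} :
    (∀ i ∈ S.image (Sum.inl : ν → ν ⊕ β), joinAsg v b i = liftAsg c i) ↔ ∀ i ∈ S, v i = c i :=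
  forall_mem_image

/-- The `Fintype` instance is arbitrary, since the one arising from an instance of a general
definition at `ν ⊕ β` uses a different decidable equality than the one found directly. -/
lemma sum_joinAsg {R : Type*} [AddCommMonoid R] [Fintype ν] [Fintype β] [∀ i, Fintype (Val i)]
    [∀ p, Fintype (B p)] {inst : Fintype (Asg (SumVal Val B))} (F : Asg (SumVal Val B) → R) :
    ∑ w, F w = ∑ v : Asg Val, ∑ b : Asg B, F (joinAsg v b) := by
  have hsplit : ∀ w, F w = F (joinAsg (fun i => w (Sum.inl i)) fun p => w (Sum.inr p)) := by
    intro w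
    congr 1
    funext i
    cases i <;> rfl
  rw [← Fintype.sum_prod_type']
  exact Fintype.sum_equiv (Equiv.sumPiEquivProdPi (SumVal Val B)) _ _ hsplit

lemma sum_ite_forall_inl_eq {R : Type*} [AddCommMonoid R] [Fintype ν] [Fintype β]
    [∀ i, Fintype (Val i)] [∀ p, Fintype (B p)] (a : Asg Val) (F : Asg (SumVal Val B) → R) :
    (∑ w : Asg (SumVal Val B), if ∀ i, w (Sum.inl i) = a i then F w else 0) =
      ∑ b : Asg B, F (joinAsg a b) := by
  simp only [sum_joinAsg, forall_inl_joinAsg_iff]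
  rw [Fintype.sum_eq_single a fun v hv => by simp [hv]]
  simp

end JoinAsg

namespace CM

section POSCM

variable {ν : Type} {Val : ν → Type} [Fintype ν] [∀ i, Fintype (Val i)] [∀ i, Nonempty (Val i)]
  {M : CM ν Val}

lemma WF.MN_cpt_congr (hM : M.WF) (i : ν ⊕ POI M) (w w' : Asg (SumVal Val (POB M)))
    (x : SumVal Val (POB M) i) (h : ∀ j ∈ M.MN.pa i, w j = w' j) :
    M.MN.cpt i w x = M.MN.cpt i w' x := by
  rcases i with i | p
  · have hpa : ∀ j ∈ M.pa i, w (Sum.inl j) = w' (Sum.inl j) := fun j hj =>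
      h _ (mem_union_left _ (mem_image_of_mem _ hj))
    by_cases hi : i ∈ M.exo
    · simp only [CM.MN, dif_pos hi]
      exact hM.cpt_pa i _ _ x hpa
    · simp only [CM.MN, dif_neg hi]
      have hκ : M.restrictPa i (fun j => w (Sum.inl j)) =
          M.restrictPa i fun j => w' (Sum.inl j) :=
        restrictPa_eq_iff.2 hpa
      have hp : ∀ κ, w (Sum.inr ⟨⟨i, hi⟩, κ⟩) = w' (Sum.inr ⟨⟨i, hi⟩, κ⟩) := fun κ =>
        h _ (mem_union_right _ (mem_image_of_mem _ (mem_filter.2 ⟨mem_univ _, rfl⟩)))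
      have houtcome :
          w (Sum.inr ⟨⟨i, hi⟩, M.restrictPa i fun j => w (Sum.inl j)⟩) =
            w' (Sum.inr ⟨⟨i, hi⟩, M.restrictPa i fun j => w' (Sum.inl j)⟩) := by
        rw [hκ]
        exact hp _
      exact congrArg (fun y => if x = y then (1 : ℝ) else 0) houtcome
  · rfl

lemma WF.MN (hM : M.WF) : M.MN.WF where
  pa_exo i hi := by
    rcases i with i | p
    · have hi' : i ∈ M.exo := by simpa [CM.MN] using hi
      ext j
      rcases j with j | q
      · simp [CM.MN, hM.pa_exo i hi']
      · have hq : q.1.1 ≠ i := fun h => q.1.2 (h ▸ hi')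
        simpa [CM.MN] using hq
    · rfl
  acyclic i j hj := by
    rcases i with i | p <;> rcases j with j | q
    · have hj' : j ∈ M.pa i := by simpa [CM.MN] using hj
      exact Nat.succ_lt_succ (hM.acyclic i j hj')
    · exact Nat.succ_pos _
    · simp [CM.MN] at hj
    · simp [CM.MN] at hj
  cpt_pa := hM.MN_cpt_congr
  cpt_nonneg i w x := by
    rcases i with i | p
    · simp only [CM.MN]
      split_ifs
      exacts [hM.cpt_nonneg _ _ _, zero_le_one, le_rfl]
    · exact hM.cpt_nonneg _ _ _
  cpt_sum i w := by
    rcases i with i | p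
    · by_cases hi : i ∈ M.exo
      · simp only [CM.MN, dif_pos hi]
        exact hM.cpt_sum _ _
      · simp only [CM.MN, dif_neg hi]
        exact Fintype.sum_ite_eq' _ _
    · exact hM.cpt_sum _ _

lemma MN_cpt_inl_of_mem_exo {i : ν} (hi : i ∈ M.exo) (v : Asg Val) (b : Asg (POB M)) :
    M.MN.cpt (Sum.inl i) (joinAsg v b) (joinAsg v b (Sum.inl i)) = M.cpt i v (v i) :=
  dif_pos hi

lemma MN_cpt_inl (i : RVI M) (v : Asg Val) (b : Asg (POB M)) :
    M.MN.cpt (Sum.inl i.1) (joinAsg v b) (joinAsg v b (Sum.inl i.1)) =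
      if b ⟨i, M.restrictPa i.1 v⟩ = v i.1 then 1 else 0 :=
  (dif_neg i.2).trans (if_congr eq_comm rfl rfl)

lemma MN_joint_joinAsg (a : Asg Val) (b : Asg (POB M)) :
    M.MN.joint (joinAsg a b) = (∏ i ∈ M.exo, M.cpt i a (a i)) *
      ∏ i : RVI M,
        if b ⟨i, M.restrictPa i.1 a⟩ = a i.1 then M.qGH i (fun κ => b ⟨i, κ⟩) else 0 := by
  have hinl : ∏ i, M.MN.cpt (Sum.inl i) (joinAsg a b) (joinAsg a b (Sum.inl i)) =
      (∏ i ∈ M.exo, M.cpt i a (a i)) *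
        ∏ i : RVI M, if b ⟨i, M.restrictPa i.1 a⟩ = a i.1 then 1 else 0 := by
    rw [← prod_mul_prod_compl M.exo, prod_congr rfl fun i hi => MN_cpt_inl_of_mem_exo hi a b]
    congr 1
    exact (prod_subtype _ (fun _ => mem_compl) _).trans
      (Fintype.prod_congr _ _ fun i => MN_cpt_inl i a b)
  have hinr : ∏ p : POI M, M.MN.cpt (Sum.inr p) (joinAsg a b) (joinAsg a b (Sum.inr p)) =
      ∏ i : RVI M, M.qGH i fun κ => b ⟨i, κ⟩ :=
    Fintype.prod_sigma _
  rw [joint, Fintype.prod_sum_type, hinl, hinr, mul_assoc, ← prod_mul_distrib]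
  simp only [ite_mul, one_mul, zero_mul]

lemma MN_pdo_joinAsg_of_ne (F : Finset ν) (c v : Asg Val) {b b' : Asg (POB M)} (hb : b' ≠ b) :
    M.MN.pdo (F.disjSum univ) (joinAsg c b) (joinAsg v b') = 0 :=
  pdo_of_not_forall_eq fun h => hb (funext fun p => h (Sum.inr p) (by simp))

lemma MN_pdo_joinAsg {F : Finset ν} (hF : M.exo ⊆ F) (c v : Asg Val) (b : Asg (POB M)) :
    M.MN.pdo (F.disjSum univ) (joinAsg c b) (joinAsg v b) =
      if ∀ i ∈ F, v i = c i then ∏ i : RVI M,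
        if i.1 ∈ F then 1 else if b ⟨i, M.restrictPa i.1 v⟩ = v i.1 then 1 else 0
      else 0 := by
  have hagree : (∀ i ∈ F.disjSum univ, joinAsg v b i = joinAsg c b i) ↔ ∀ i ∈ F, v i = c i := by
    refine ⟨fun h i hi => h (Sum.inl i) (inl_mem_disjSum.2 hi), fun h => ?_⟩
    rintro (i | p) hi
    exacts [h i (inl_mem_disjSum.1 hi), rfl]
  have hcompl : (F.disjSum (univ : Finset (POI M)))ᶜ = Fᶜ.disjSum ∅ := by
    ext i
    cases i <;> simp
  split_ifs with hv
  · rw [pdo_of_forall_eq (hagree.2 hv), hcompl, prod_disjSum, prod_empty, mul_one,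
      prod_compl_eq_prod_subtype hF]
    exact Fintype.prod_congr _ _ fun i => if_congr Iff.rfl rfl (MN_cpt_inl i v b)
  · exact pdo_of_not_forall_eq (mt hagree.1 hv)

lemma WF.sum_MN_pdo_mul_joint (hM : M.WF) {F : Finset ν} (hF : M.exo ⊆ F) (a c v : Asg Val) :
    ∑ b : Asg (POB M), M.MN.pdo (F.disjSum univ) (joinAsg c b) (joinAsg v b) *
        M.MN.joint (joinAsg a b) = M.joint a * (M.refine a).pdo F c v := by
  let G (i : RVI M) (f : M.RType i.1) : ℝ :=
    (if i.1 ∈ F then 1 else if f (M.restrictPa i.1 v) = v i.1 then 1 else 0) *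
      if f (M.restrictPa i.1 a) = a i.1 then M.qGH i f else 0
  have hG (i : RVI M) : ∑ f, G i f =
      M.cpt i.1 a (a i.1) * if i.1 ∈ F then 1 else (M.refine a).cpt i.1 v (v i.1) := by
    simp only [G]
    split_ifs with hi
    · simp only [one_mul, mul_one, hM.sum_qGH_ite_eq]
    · simp only [ite_mul, one_mul, zero_mul, ← ite_and, ← hM.sum_qGH_ite_actual i a v (v i.1),
        and_comm]
  have hjoint : M.joint a =
      (∏ i ∈ M.exo, M.cpt i a (a i)) * ∏ i : RVI M, M.cpt i.1 a (a i.1) :=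
    (prod_mul_prod_compl M.exo _).symm.trans
      (congrArg _ (prod_subtype _ (fun _ => mem_compl) _))
  by_cases hv : ∀ i ∈ F, v i = c i
  · have hrefine : (M.refine a).pdo F c v =
        ∏ i : RVI M, if i.1 ∈ F then 1 else (M.refine a).cpt i.1 v (v i.1) :=
      (pdo_of_forall_eq hv).trans
        (prod_compl_eq_prod_subtype hF fun i => (M.refine a).cpt i v (v i))
    have hfactor (b : Asg (POB M)) :
        M.MN.pdo (F.disjSum univ) (joinAsg c b) (joinAsg v b) * M.MN.joint (joinAsg a b) =
          (∏ i ∈ M.exo, M.cpt i a (a i)) * ∏ i : RVI M, G i fun κ => b ⟨i, κ⟩ := by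
      rw [MN_pdo_joinAsg hF, if_pos hv, MN_joint_joinAsg, mul_left_comm, ← prod_mul_distrib]
      rfl
    simp only [hfactor, ← mul_sum, sum_prod_response, hG, prod_mul_distrib, hjoint, hrefine,
      mul_assoc]
  · rw [pdo_of_not_forall_eq hv, mul_zero]
    exact sum_eq_zero fun b _ => by rw [MN_pdo_joinAsg hF, if_neg hv, zero_mul]

lemma WF.sum_MN_joint (hM : M.WF) (a : Asg Val) :
    ∑ b : Asg (POB M), M.MN.joint (joinAsg a b) = M.joint a := by
  simpa [MN_pdo_joinAsg, pdo_univ] using hM.sum_MN_pdo_mul_joint (subset_univ M.exo) a a a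

lemma WF.MN_cfBasic (hM : M.WF) {X : Finset ν} {xv a c : Asg Val} {b : Asg (POB M)}
    (hcU : ∀ i ∈ M.exo, c i = a i) (hcX : ∀ i ∈ X, c i = xv i)
    (hab : M.MN.joint (joinAsg a b) ≠ 0) (Y : Finset ν) (yv : Asg Val) :
    M.MN.cfBasic (X.image Sum.inl) (liftAsg xv) (Y.image Sum.inl) (liftAsg yv) (joinAsg a b) =
      ∑ v : Asg Val, if ∀ i ∈ Y, v i = yv i then
        M.MN.pdo ((M.exo ∪ X).disjSum univ) (joinAsg c b) (joinAsg v b) else 0 := by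
  have hF : ∀ i, i ∈ (M.exo ∪ X).disjSum univ ↔ i ∈ M.MN.exo ∨ i ∈ X.image Sum.inl := by
    rintro (i | p) <;> simp [CM.MN]
  have hcU' : ∀ i ∈ M.MN.exo, joinAsg c b i = joinAsg a b i := by
    rintro (i | p) hi
    · exact hcU i (by simpa [CM.MN] using hi)
    · rfl
  rw [hM.MN.cfBasic_eq_sum_pdo hF hcU' (forall_image_inl_iff.2 hcX)
    (fun i _ => prod_ne_zero_iff.1 hab i (mem_univ i)), sum_joinAsg]
  simp only [forall_image_inl_iff]
  refine sum_congr rfl fun v _ => Fintype.sum_eq_single b fun b' hb => ?_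
  rw [MN_pdo_joinAsg_of_ne _ _ _ hb, ite_self]

lemma WF.sum_MN_cfBasic_mul_joint (hM : M.WF) {X : Finset ν} {xv a c : Asg Val}
    (hcU : ∀ i ∈ M.exo, c i = a i) (hcX : ∀ i ∈ X, c i = xv i)
    (ha : ∀ i ∈ M.exo, M.cpt i a (a i) ≠ 0) (Y : Finset ν) (yv : Asg Val) :
    ∑ b : Asg (POB M), M.MN.cfBasic (X.image Sum.inl) (liftAsg xv) (Y.image Sum.inl)
        (liftAsg yv) (joinAsg a b) * M.MN.joint (joinAsg a b) =
      M.joint a * (M.refine a).cfBasic X xv Y yv a := by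
  have ha' : ∀ i ∈ M.exo, (M.refine a).cpt i a (a i) ≠ 0 := fun i hi => by
    rw [refine_cpt_of_mem_exo hi]
    exact ha i hi
  have hMN (b : Asg (POB M)) : M.MN.cfBasic (X.image Sum.inl) (liftAsg xv) (Y.image Sum.inl)
        (liftAsg yv) (joinAsg a b) * M.MN.joint (joinAsg a b) =
      ∑ v : Asg Val, if ∀ i ∈ Y, v i = yv i then
        M.MN.pdo ((M.exo ∪ X).disjSum univ) (joinAsg c b) (joinAsg v b) *
          M.MN.joint (joinAsg a b) else 0 := by
    -- at a null world `cfBasic` is the junk value `0 / 0`, but it has weight zero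
    by_cases hab : M.MN.joint (joinAsg a b) = 0
    · simp [hab]
    · simp only [hM.MN_cfBasic hcU hcX hab, sum_mul, ite_mul, zero_mul]
  rw [sum_congr rfl fun b _ => hMN b, sum_comm,
    (hM.refine a).cfBasic_eq_sum_pdo (fun _ => mem_union) hcU hcX ha', mul_sum]
  refine sum_congr rfl fun v _ => ?_
  split_ifs
  · exact hM.sum_MN_pdo_mul_joint subset_union_left a c v
  · rw [sum_const_zero, mul_zero]

end POSCM

end CM

theorem pbBasic_eq_pnBasicCond_general
    {ν : Type} {Val : ν → Type} [Fintype ν] [∀ i, Fintype (Val i)] [∀ i, Nonempty (Val i)]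
    (M : CM ν Val) (hM : M.WF) (a : Asg Val) (ha : 0 < M.joint a)
    (X : Finset ν) (xv : Asg Val) (hX : ∀ i ∈ X, i ∈ M.exo → xv i = a i)
    (Y : Finset ν) (yv : Asg Val) :
    M.pbBasic a X xv Y yv = M.pnBasicCond a X xv Y yv := by
  have hcU : ∀ i ∈ M.exo, X.piecewise xv a i = a i := fun i hi => by
    by_cases hiX : i ∈ X <;> simp [hiX, hX i, hi]
  have hcX : ∀ i ∈ X, X.piecewise xv a i = xv i := fun i => X.piecewise_eq_of_mem xv a
  have hexo : ∀ i ∈ M.exo, M.cpt i a (a i) ≠ 0 := fun i _ =>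
    prod_ne_zero_iff.1 ha.ne' i (mem_univ i)
  rw [CM.pbBasic, CM.pnBasicCond, extBasicCond, sum_ite_forall_inl_eq, sum_ite_forall_inl_eq,
    hM.sum_MN_cfBasic_mul_joint hcU hcX hexo, hM.sum_MN_joint, mul_div_cancel_left₀ _ ha.ne']

/-- **Theorem 1.** Given a causal model `M`, for every `(u, v) ∈ R(U ∪ V)` with
`P_M(u, v) > 0` and all `Y, X ⊆ V`, `y ∈ R(Y)`, `x ∈ R(X)`: the B-probability of the
basic counterfactual equals the probability of the basic counterfactual computed in the
PO-SCM, conditional on the exogenous and endogenous variables of `M` only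
(marginalizing over the potential outcome variables):
`P^B(y_x | u, v) = P^N(y_x | u, v)`. -/
theorem pbBasic_eq_pnBasicCond
    {ν : Type} {Val : ν → Type} [Fintype ν] [∀ i, Fintype (Val i)] [∀ i, Nonempty (Val i)]
    (M : CM ν Val) (hM : M.WF) (a : Asg Val) (ha : 0 < M.joint a)
    (X : Finset ν) (hX : ∀ i ∈ X, i ∉ M.exo) (xv : Asg Val)
    (Y : Finset ν) (hY : ∀ i ∈ Y, i ∉ M.exo) (yv : Asg Val) :
    M.pbBasic a X xv Y yv = M.pnBasicCond a X xv Y yv := by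
  exact pbBasic_eq_pnBasicCond_general M hM a ha X xv (fun i hi hiU => absurd hiU (hX i hi)) Y yv

end
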